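/- Suppose n ≡ 0 (mod 4). Then the fixed subring A^G is generated as a ℂ-algebra by the orbit sums of degrees n and 2n; that is, A^G equals the ℂ-subalgebra of A generated by the set {O(n−i, i) : 0 ≤ i ≤ n/2} ∪ {O(2n−i, i) : 0 ≤ i ≤ n}. (This is the upper bound β(g) ≤ 2n.) -/

import Mathlib

/-!
Setting: `lam n = exp(2πi/n)` is a primitive `n`-th root of unity in `ℂ`.
`SkewAlg` is the `(-1)`-skew polynomial ring `A = ℂ⟨u,v⟩/(uv+vu)`, with
generators `uGen`, `vGen`.  The automorphism `g` (of order `2n`) is determined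
by `g u = v`, `g v = lam n • u`, and generates the cyclic group `G`, so that
the fixed subring `A^G` is `{a | g a = a}`.  The orbit sum is
`orbitSum n a b = u^a v^b + (-1)^(a*b) * (lam n)^b • (u^b v^a)`.
-/

noncomputable section

/-- `lam n = exp(2πi/n)`, a primitive `n`-th root of unity. -/
def lam (n : ℕ) : ℂ := Complex.exp (2 * (Real.pi : ℂ) * Complex.I / (n : ℂ))

/-- The defining relation of the `(-1)`-skew polynomial ring: `uv + vu = 0`. -/
inductive SkewRel : FreeAlgebra ℂ (Fin 2) → FreeAlgebra ℂ (Fin 2) → Prop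
  | rel : SkewRel (FreeAlgebra.ι ℂ 0 * FreeAlgebra.ι ℂ 1 + FreeAlgebra.ι ℂ 1 * FreeAlgebra.ι ℂ 0) 0

/-- The skew polynomial ring `A = ℂ⟨u,v⟩/(uv+vu)`. -/
abbrev SkewAlg : Type := RingQuot SkewRel

/-- The generator `u` of `A`. -/
def uGen : SkewAlg := RingQuot.mkAlgHom ℂ SkewRel (FreeAlgebra.ι ℂ 0)

/-- The generator `v` of `A`. -/
def vGen : SkewAlg := RingQuot.mkAlgHom ℂ SkewRel (FreeAlgebra.ι ℂ 1)

/-- Orbit sum `O(a,b) = u^a v^b + (-1)^(ab) λ^b u^b v^a`. -/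
def orbitSum (n a b : ℕ) : SkewAlg :=
  uGen ^ a * vGen ^ b + ((-1 : ℂ) ^ (a * b) * lam n ^ b) • (uGen ^ b * vGen ^ a)

/-!
A monomial `u^a v^b` is an eigenvector of `g²` with eigenvalue `λ^(a+b)`. Eigenvectors for distinct
eigenvalues are independent, so every fixed point of `g` is a combination of monomials with
`n ∣ a + b`, and averaging it over `{1, g}` turns these monomials into orbit sums. For even `n`
the elements `u^n` and `v^n` are central, and

* `u^n v^n * O(a, b) = O(a + n, b + n)`,
* `(u^n + v^n) * O(a, b) = O(a + n, b) + O(a, b + n)`,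

which reduces every orbit sum of degree at least `3n` to orbit sums of smaller degree.
-/

section QCommuting

variable {R A : Type*} [CommSemiring R] [Semiring A] [Algebra R A] {q : R} {x y : A}

theorem pow_mul_eq_smul_of_mul_eq_smul (h : y * x = q • (x * y)) (b : ℕ) :
    y ^ b * x = q ^ b • (x * y ^ b) := by
  induction b with
  | zero => simp
  | succ b ih =>
    rw [pow_succ, mul_assoc, h, mul_smul_comm, ← mul_assoc, ih, smul_mul_assoc, mul_assoc,
      smul_smul, pow_succ']

theorem pow_mul_pow_eq_smul_of_mul_eq_smul (h : y * x = q • (x * y)) (a b : ℕ) :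
    y ^ b * x ^ a = q ^ (a * b) • (x ^ a * y ^ b) := by
  induction a with
  | zero => simp
  | succ a ih =>
    rw [pow_succ, ← mul_assoc, ih, smul_mul_assoc, mul_assoc,
      pow_mul_eq_smul_of_mul_eq_smul h, mul_smul_comm, smul_smul, ← mul_assoc, ← pow_add,
      Nat.succ_mul]

theorem monomial_mul_monomial_of_mul_eq_smul (h : y * x = q • (x * y)) (a b c d : ℕ) :
    x ^ a * y ^ b * (x ^ c * y ^ d) = q ^ (c * b) • (x ^ (a + c) * y ^ (b + d)) := by
  rw [mul_assoc, ← mul_assoc (y ^ b), pow_mul_pow_eq_smul_of_mul_eq_smul h, smul_mul_assoc,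
    mul_smul_comm, pow_add, pow_add]
  simp only [mul_assoc]

theorem adjoin_pair_le_span_monomials (h : y * x = q • (x * y)) :
    Subalgebra.toSubmodule (Algebra.adjoin R {x, y}) ≤
      Submodule.span R (Set.range fun p : ℕ × ℕ => x ^ p.1 * y ^ p.2) := by
  set M := Submodule.span R (Set.range fun p : ℕ × ℕ => x ^ p.1 * y ^ p.2) with hM
  have monomial_mem (a b : ℕ) : x ^ a * y ^ b ∈ M := Submodule.subset_span ⟨(a, b), rfl⟩
  have one_mem : (1 : A) ∈ M := by simpa using monomial_mem 0 0
  have mul_le : M * M ≤ M := by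
    rw [hM, Submodule.span_mul_span, Submodule.span_le]
    rintro _ ⟨_, ⟨⟨a, b⟩, rfl⟩, _, ⟨⟨c, d⟩, rfl⟩, rfl⟩
    simpa only [monomial_mul_monomial_of_mul_eq_smul h, ← hM, SetLike.mem_coe] using
      M.smul_mem _ (monomial_mem _ _)
  have adjoin_le : Algebra.adjoin R {x, y} ≤
      M.toSubalgebra one_mem fun _ _ ha hb => mul_le (Submodule.mul_mem_mul ha hb) := by
    rw [Algebra.adjoin_le_iff]
    rintro _ (rfl | rfl)
    · simpa using monomial_mem 1 0
    · simpa using monomial_mem 0 1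
  exact fun _ hz => adjoin_le hz

end QCommuting

theorem eigenspace_eq_span_image {R M ι : Type*} [CommRing R] [IsDomain R] [AddCommGroup M]
    [Module R M] [Module.IsTorsionFree R M] {f : Module.End R M} {v : ι → M} {μ : ι → R}
    (hv : ∀ i, f (v i) = μ i • v i) (hspan : Submodule.span R (Set.range v) = ⊤)
    (c : R) :
    f.eigenspace c = Submodule.span R (v '' {i | μ i = c}) := by
  have span_le : Submodule.span R (v '' {i | μ i = c}) ≤ f.eigenspace c := by
    rw [Submodule.span_le]
    rintro _ ⟨i, rfl, rfl⟩
    exact Module.End.mem_eigenspace_iff.2 (hv i)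
  have span_compl_le :
      Submodule.span R (v '' {i | μ i = c}ᶜ) ≤ ⨆ d ≠ c, f.eigenspace d := by
    rw [Submodule.span_le]
    rintro _ ⟨i, hi, rfl⟩
    exact Submodule.mem_iSup_of_mem (μ i)
      (Submodule.mem_iSup_of_mem hi (Module.End.mem_eigenspace_iff.2 (hv i)))
  have disjoint : Disjoint (f.eigenspace c) (Submodule.span R (v '' {i | μ i = c}ᶜ)) :=
    (f.eigenspaces_iSupIndep c).mono_right span_compl_le
  have sup_eq_top : Submodule.span R (v '' {i | μ i = c}) ⊔
      Submodule.span R (v '' {i | μ i = c}ᶜ) = ⊤ := by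
    rw [← Submodule.span_union, ← Set.image_union, Set.union_compl_self, Set.image_univ, hspan]
  exact (eq_of_le_of_inf_le_of_sup_le span_le (disjoint.le_bot.trans bot_le)
    (le_top.trans sup_eq_top.ge)).symm

theorem vGen_mul_uGen : vGen * uGen = (-1 : ℂ) • (uGen * vGen) := by
  have h : uGen * vGen + vGen * uGen = 0 := by
    simpa only [uGen, vGen, map_add, map_mul, map_zero] using RingQuot.mkAlgHom_rel ℂ SkewRel.rel
  exact (eq_neg_of_add_eq_zero_right h).trans (neg_one_smul ℂ _).symm

theorem vGen_pow_mul_uGen_pow (a b : ℕ) :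
    vGen ^ b * uGen ^ a = (-1 : ℂ) ^ (a * b) • (uGen ^ a * vGen ^ b) :=
  pow_mul_pow_eq_smul_of_mul_eq_smul vGen_mul_uGen a b

theorem adjoin_uGen_vGen : Algebra.adjoin ℂ {uGen, vGen} = ⊤ := by
  have range_ι : Set.range (FreeAlgebra.ι ℂ : Fin 2 → _) =
      {FreeAlgebra.ι ℂ 0, FreeAlgebra.ι ℂ 1} := by
    ext; simp [Fin.exists_fin_two, eq_comm]
  have h := congrArg (Subalgebra.map (RingQuot.mkAlgHom ℂ SkewRel))
    (FreeAlgebra.adjoin_range_ι (R := ℂ) (X := Fin 2))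
  rwa [range_ι, AlgHom.map_adjoin, Set.image_pair, Algebra.map_top,
    (AlgHom.range_eq_top _).2 (RingQuot.mkAlgHom_surjective ℂ SkewRel)] at h

theorem span_monomials_eq_top :
    Submodule.span ℂ (Set.range fun p : ℕ × ℕ => uGen ^ p.1 * vGen ^ p.2) = ⊤ := by
  rw [eq_top_iff, ← Algebra.top_toSubmodule, ← adjoin_uGen_vGen]
  exact adjoin_pair_le_span_monomials vGen_mul_uGen

theorem isPrimitiveRoot_lam {n : ℕ} (hn : n ≠ 0) : IsPrimitiveRoot (lam n) n :=
  Complex.isPrimitiveRoot_exp n hn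

theorem lam_pow_eq_one_of_dvd {n m : ℕ} (h : n ∣ m) : lam n ^ m = 1 := by
  obtain rfl | hn := eq_or_ne n 0
  · rw [zero_dvd_iff.1 h, pow_zero]
  · exact ((isPrimitiveRoot_lam hn).pow_eq_one_iff_dvd m).2 h

section FixedPoints

variable {n : ℕ} {g : SkewAlg ≃ₐ[ℂ] SkewAlg}

theorem orbitSum_eq_add_map (hgu : g uGen = vGen) (hgv : g vGen = lam n • uGen) (a b : ℕ) :
    orbitSum n a b = uGen ^ a * vGen ^ b + g (uGen ^ a * vGen ^ b) := by
  rw [orbitSum, map_mul, map_pow, map_pow, hgu, hgv, smul_pow, mul_smul_comm,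
    vGen_pow_mul_uGen_pow, smul_smul, mul_comm b a, mul_comm (lam n ^ b)]

theorem map_map_monomial (hgu : g uGen = vGen) (hgv : g vGen = lam n • uGen) (a b : ℕ) :
    g (g (uGen ^ a * vGen ^ b)) = lam n ^ (a + b) • (uGen ^ a * vGen ^ b) := by
  simp only [map_mul, map_pow, hgu, hgv, map_smul, smul_pow, mul_smul_comm, smul_mul_assoc,
    smul_smul, pow_add, mul_comm (lam n ^ b)]

theorem map_orbitSum (hgu : g uGen = vGen) (hgv : g vGen = lam n • uGen) {a b : ℕ}
    (h : n ∣ a + b) : g (orbitSum n a b) = orbitSum n a b := by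
  rw [orbitSum_eq_add_map hgu hgv, map_add, map_map_monomial hgu hgv, lam_pow_eq_one_of_dvd h,
    one_smul, add_comm]

theorem mem_span_orbitSum_of_map_eq_self (hn : n ≠ 0) (hgu : g uGen = vGen)
    (hgv : g vGen = lam n • uGen) {x : SkewAlg} (hx : g x = x) :
    x ∈ Submodule.span ℂ {y | ∃ a b : ℕ, n ∣ a + b ∧ y = orbitSum n a b} := by
  set M := Submodule.span ℂ {y | ∃ a b : ℕ, n ∣ a + b ∧ y = orbitSum n a b}
  have eigenspace_le : Module.End.eigenspace (g.toLinearMap ∘ₗ g.toLinearMap) 1 ≤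
      M.comap (LinearMap.id + g.toLinearMap) := by
    rw [eigenspace_eq_span_image (fun p : ℕ × ℕ => map_map_monomial hgu hgv p.1 p.2)
      span_monomials_eq_top, Submodule.span_le]
    rintro _ ⟨⟨a, b⟩, hab, rfl⟩
    exact Submodule.subset_span
      ⟨a, b, (isPrimitiveRoot_lam hn).dvd_of_pow_eq_one _ hab,
        (orbitSum_eq_add_map hgu hgv a b).symm⟩
  have x_mem : x ∈ Module.End.eigenspace (g.toLinearMap ∘ₗ g.toLinearMap) 1 := by
    simp [hx]
  have two_smul_mem : (2 : ℂ) • x ∈ M := by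
    simpa [hx, two_smul] using eigenspace_le x_mem
  exact (M.smul_mem_iff two_ne_zero).1 two_smul_mem

end FixedPoints

section Recurrences

variable {n : ℕ}

theorem orbitSum_swap {a b : ℕ} (h : n ∣ a + b) :
    orbitSum n b a = ((-1 : ℂ) ^ (a * b) * lam n ^ a) • orbitSum n a b := by
  have coeff_mul : (-1 : ℂ) ^ (a * b) * lam n ^ a * ((-1) ^ (a * b) * lam n ^ b) = 1 := by
    rw [mul_mul_mul_comm, ← mul_pow, ← pow_add, lam_pow_eq_one_of_dvd h]
    simp
  rw [orbitSum, orbitSum, smul_add, smul_smul, coeff_mul, one_smul, add_comm, mul_comm b a]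

theorem orbitSum_zero_zero : orbitSum n 0 0 = 2 := by
  simp [orbitSum, one_add_one_eq_two]

theorem orbitSum_self_zero : orbitSum n n 0 = uGen ^ n + vGen ^ n := by
  simp [orbitSum]

theorem orbitSum_self_self (hn : Even n) : orbitSum n n n = (2 : ℂ) • (uGen ^ n * vGen ^ n) := by
  rw [orbitSum, (hn.mul_left n).neg_one_pow, lam_pow_eq_one_of_dvd dvd_rfl, one_mul, one_smul,
    two_smul]

theorem uGen_pow_mul_vGen_pow_mul_orbitSum (hn : Even n) (a b : ℕ) :
    uGen ^ n * vGen ^ n * orbitSum n a b = orbitSum n (a + n) (b + n) := by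
  have coeff_eq : (-1 : ℂ) ^ ((a + n) * (b + n)) * lam n ^ (b + n) =
      (-1) ^ (a * b) * lam n ^ b := by
    have parity : (a + n) * (b + n) = a * b + n * (a + b + n) := by ring
    rw [parity, pow_add, (hn.mul_right _).neg_one_pow, mul_one, pow_add,
      lam_pow_eq_one_of_dvd dvd_rfl, mul_one]
  have mul_monomial (c d : ℕ) :
      uGen ^ n * vGen ^ n * (uGen ^ c * vGen ^ d) = uGen ^ (c + n) * vGen ^ (d + n) := by
    rw [monomial_mul_monomial_of_mul_eq_smul vGen_mul_uGen, (hn.mul_left c).neg_one_pow, one_smul,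
      add_comm n, add_comm n]
  rw [orbitSum, orbitSum, coeff_eq, mul_add, mul_smul_comm, mul_monomial, mul_monomial]

theorem uGen_pow_add_vGen_pow_mul_orbitSum (hn : Even n) (a b : ℕ) :
    (uGen ^ n + vGen ^ n) * orbitSum n a b = orbitSum n (a + n) b + orbitSum n a (b + n) := by
  have coeff_left : (-1 : ℂ) ^ ((a + n) * b) = (-1) ^ (a * b) := by
    rw [add_mul, pow_add, (hn.mul_right b).neg_one_pow, mul_one]
  have coeff_right : (-1 : ℂ) ^ (a * (b + n)) * lam n ^ (b + n) = (-1) ^ (a * b) * lam n ^ b := by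
    rw [mul_add, pow_add, (hn.mul_left a).neg_one_pow, mul_one, pow_add,
      lam_pow_eq_one_of_dvd dvd_rfl, mul_one]
  have uGen_pow_mul (c d : ℕ) :
      uGen ^ n * (uGen ^ c * vGen ^ d) = uGen ^ (c + n) * vGen ^ d := by
    rw [← mul_assoc, ← pow_add, add_comm]
  have vGen_pow_mul (c d : ℕ) :
      vGen ^ n * (uGen ^ c * vGen ^ d) = uGen ^ c * vGen ^ (d + n) := by
    rw [← mul_assoc, vGen_pow_mul_uGen_pow, (hn.mul_left c).neg_one_pow, one_smul, mul_assoc,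
      ← pow_add, add_comm]
  rw [orbitSum, orbitSum, orbitSum, coeff_left, coeff_right, mul_add, mul_smul_comm, add_mul,
    add_mul, uGen_pow_mul, uGen_pow_mul, vGen_pow_mul, vGen_pow_mul, smul_add]
  abel

end Recurrences

section Generation

variable {n : ℕ} {S : Subalgebra ℂ SkewAlg}

theorem orbitSum_mem_of_le_half {d : ℕ} (hd : n ∣ d)
    (hS : ∀ i ≤ d / 2, orbitSum n (d - i) i ∈ S) {a b : ℕ} (hab : a + b = d) :
    orbitSum n a b ∈ S := by
  subst hab
  obtain hb | ha : b ≤ (a + b) / 2 ∨ a ≤ (a + b) / 2 := by omega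
  · simpa using hS b hb
  · rw [orbitSum_swap (add_comm a b ▸ hd)]
    exact S.smul_mem (by simpa using hS a ha) _

theorem orbitSum_mem_of_add_eq_succ_mul (hn : Even n)
    (hS₁ : ∀ a b, a + b = n → orbitSum n a b ∈ S)
    (hS₂ : ∀ a b, a + b = 2 * n → orbitSum n a b ∈ S) (k : ℕ) :
    ∀ a b, a + b = (k + 1) * n → orbitSum n a b ∈ S := by
  have add_mem : uGen ^ n + vGen ^ n ∈ S := orbitSum_self_zero ▸ hS₁ n 0 (add_zero n)
  have mul_mem : uGen ^ n * vGen ^ n ∈ S := by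
    have h := orbitSum_self_self hn ▸ hS₂ n n (two_mul n).symm
    exact (S.toSubmodule.smul_mem_iff two_ne_zero).1 h
  induction k using Nat.twoStepInduction with
  | zero => simpa using hS₁
  | one => exact hS₂
  | more k ih₁ ih₂ =>
    have of_le_of_le (a b : ℕ) (ha : n ≤ a) (hb : n ≤ b) (hab : a + b = (k + 2 + 1) * n) :
        orbitSum n a b ∈ S := by
      obtain ⟨a, rfl⟩ := Nat.exists_eq_add_of_le' ha
      obtain ⟨b, rfl⟩ := Nat.exists_eq_add_of_le' hb
      rw [← uGen_pow_mul_vGen_pow_mul_orbitSum hn]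
      exact S.mul_mem mul_mem (ih₁ a b (by linarith))
    intro a b hab
    have three_mul_le : 3 * n ≤ a + b := hab ▸ Nat.mul_le_mul_right n (by omega)
    obtain ⟨ha, hb⟩ | ha | hb : (n ≤ a ∧ n ≤ b) ∨ n + n ≤ a ∨ n + n ≤ b := by omega
    · exact of_le_of_le a b ha hb hab
    · obtain ⟨a, rfl⟩ := Nat.exists_eq_add_of_le' (le_of_add_le_left ha)
      rw [eq_sub_of_add_eq (uGen_pow_add_vGen_pow_mul_orbitSum hn a b).symm]
      exact S.sub_mem (S.mul_mem add_mem (ih₂ a b (by linarith)))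
        (of_le_of_le a (b + n) (by omega) (by omega) (by linarith))
    · obtain ⟨b, rfl⟩ := Nat.exists_eq_add_of_le' (le_of_add_le_left hb)
      rw [eq_sub_of_add_eq' (uGen_pow_add_vGen_pow_mul_orbitSum hn a b).symm]
      exact S.sub_mem (S.mul_mem add_mem (ih₂ a b (by linarith)))
        (of_le_of_le (a + n) b (by omega) (by omega) (by linarith))

theorem orbitSum_mem_of_dvd (hn : Even n)
    (hS₁ : ∀ a b, a + b = n → orbitSum n a b ∈ S)
    (hS₂ : ∀ a b, a + b = 2 * n → orbitSum n a b ∈ S) {a b : ℕ} (h : n ∣ a + b) :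
    orbitSum n a b ∈ S := by
  obtain ⟨k, hk⟩ := h
  cases k with
  | zero =>
    obtain ⟨rfl, rfl⟩ : a = 0 ∧ b = 0 := by omega
    rw [orbitSum_zero_zero]
    exact ofNat_mem S 2
  | succ k => exact orbitSum_mem_of_add_eq_succ_mul hn hS₁ hS₂ k a b (by rw [hk, mul_comm])

end Generation

theorem fixed_eq_adjoin_of_mod_four_eq_zero_general (n : ℕ) (hn : 0 < n) (heven : Even n)
    (g : SkewAlg ≃ₐ[ℂ] SkewAlg) (hgu : g uGen = vGen) (hgv : g vGen = lam n • uGen) :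
    {a : SkewAlg | g a = a} =
      ↑(Algebra.adjoin ℂ
        ({x : SkewAlg | ∃ i : ℕ, i ≤ n / 2 ∧ x = orbitSum n (n - i) i} ∪
         {x : SkewAlg | ∃ i : ℕ, i ≤ n ∧ x = orbitSum n (2 * n - i) i})) := by
  apply Set.Subset.antisymm
  · intro x hx
    change x ∈ Subalgebra.toSubmodule (Algebra.adjoin ℂ _)
    refine Submodule.span_le.2 ?_ (mem_span_orbitSum_of_map_eq_self hn.ne' hgu hgv hx)
    rintro _ ⟨a, b, hab, rfl⟩
    refine orbitSum_mem_of_dvd heven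
      (fun _ _ => orbitSum_mem_of_le_half dvd_rfl fun i hi => ?_)
      (fun _ _ => orbitSum_mem_of_le_half (dvd_mul_left n 2) fun i hi => ?_) hab
    · exact Algebra.subset_adjoin (Or.inl ⟨i, hi, rfl⟩)
    · exact Algebra.subset_adjoin (Or.inr ⟨i, by omega, rfl⟩)
  · change _ ≤ AlgHom.equalizer (g : SkewAlg →ₐ[ℂ] SkewAlg) (AlgHom.id ℂ SkewAlg)
    rw [Algebra.adjoin_le_iff]
    rintro _ (⟨i, hi, rfl⟩ | ⟨i, hi, rfl⟩)
    · exact map_orbitSum hgu hgv (by rw [Nat.sub_add_cancel (by omega)])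
    · exact map_orbitSum hgu hgv (by rw [Nat.sub_add_cancel (by omega)]; exact dvd_mul_left n 2)

/-- If `n ≡ 0 (mod 4)` (and `n > 0`) then the fixed subring `A^G` is generated
as a `ℂ`-algebra by the orbit sums of degrees `n` and `2n`. -/
theorem fixed_eq_adjoin_of_mod_four_eq_zero (n : ℕ) (hn : 0 < n) (h4 : n % 4 = 0)
    (g : SkewAlg ≃ₐ[ℂ] SkewAlg) (hgu : g uGen = vGen) (hgv : g vGen = lam n • uGen) :
    {a : SkewAlg | g a = a} =
      ↑(Algebra.adjoin ℂ
        ({x : SkewAlg | ∃ i : ℕ, i ≤ n / 2 ∧ x = orbitSum n (n - i) i} ∪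
         {x : SkewAlg | ∃ i : ℕ, i ≤ n ∧ x = orbitSum n (2 * n - i) i})) := by
  have heven : Even n := Nat.even_iff.2 (by omega)
  exact fixed_eq_adjoin_of_mod_four_eq_zero_general n hn heven g hgu hgv
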